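/- For every β with π/3 < β < π/2, one has (1 / (8·cos(β)·(1 − 4·cos(β)²)²)) · (β / sin(β)) > 1. -/

import Mathlib

open Real

/-!
The two factors are bounded separately. Weighted AM-GM with weights `1 : 4` bounds
`u * (1 - u ^ 2) ^ 2` for `u = 2 cos β` by its maximum `16 / (25 √5)`, attained at `u = 1 / √5`,
while concavity of the sine makes `β / sin β` increasing, so that it exceeds its value
`2π / (3√3)` at `β = π / 3`. The product of the two bounds exceeds `1` because
`96 √3 < 25 √5 π`; after squaring, `π > 3` is enough for this.
-/

lemma pow_mul_pow_le_weighted_mean_pow (m n : ℕ) {a b : ℝ} (ha : 0 ≤ a) (hb : 0 ≤ b) :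
    a ^ m * b ^ n ≤ ((m * a + n * b) / (m + n)) ^ (m + n) := by
  obtain hmn | hmn := Nat.eq_zero_or_pos (m + n)
  · obtain ⟨rfl, rfl⟩ := Nat.add_eq_zero_iff.mp hmn
    simp
  have hpos : (0 : ℝ) < m + n := mod_cast hmn
  have rpow_weight_pow (k : ℕ) {x : ℝ} (hx : 0 ≤ x) :
      (x ^ (k / (m + n) : ℝ)) ^ (m + n) = x ^ k := by
    rw [← rpow_mul_natCast hx, Nat.cast_add, div_mul_cancel₀ _ hpos.ne', rpow_natCast]
  calc a ^ m * b ^ n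
      = (a ^ (m / (m + n) : ℝ) * b ^ (n / (m + n) : ℝ)) ^ (m + n) := by
        rw [mul_pow, rpow_weight_pow m ha, rpow_weight_pow n hb]
    _ ≤ (m / (m + n) * a + n / (m + n) * b) ^ (m + n) := by
        gcongr
        exact geom_mean_le_arith_mean2_weighted (by positivity) (by positivity) ha hb
          (by field_simp)
    _ = ((m * a + n * b) / (m + n)) ^ (m + n) := by ring

lemma mul_one_sub_sq_sq_le {u : ℝ} (hu : u ^ 2 ≤ 1) :
    u * (1 - u ^ 2) ^ 2 ≤ 16 / (25 * √5) := by
  refine le_of_abs_le (abs_le_of_sq_le_sq ?_ (by positivity))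
  have amgm : (4 * u ^ 2) ^ 1 * (1 - u ^ 2) ^ 4 ≤ (4 / 5) ^ 5 := by
    convert pow_mul_pow_le_weighted_mean_pow 1 4 (by positivity : 0 ≤ 4 * u ^ 2)
      (sub_nonneg.mpr hu) using 2
    push_cast
    ring
  calc (u * (1 - u ^ 2) ^ 2) ^ 2
      = (4 * u ^ 2) ^ 1 * (1 - u ^ 2) ^ 4 / 4 := by ring
    _ ≤ (4 / 5) ^ 5 / 4 := by gcongr
    _ = (16 / (25 * √5)) ^ 2 := by
        rw [div_pow 16, mul_pow, sq_sqrt (by norm_num)]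
        norm_num

lemma strictMonoOn_div_sin : StrictMonoOn (fun x ↦ x / sin x) (Set.Ioo 0 π) := by
  intro x hx y hy hxy
  have sin_div_lt : sin y / y < sin x / x := by
    simpa only [sin_zero, sub_zero] using
      strictConcaveOn_sin_Icc.secant_strict_mono (Set.left_mem_Icc.mpr pi_nonneg)
        (Set.Ioo_subset_Icc_self hx) (Set.Ioo_subset_Icc_self hy) hx.1.ne' hy.1.ne' hxy
  simpa only [inv_div] using
    inv_strictAnti₀ (div_pos (sin_pos_of_mem_Ioo hy) hy.1) sin_div_lt

lemma ninety_six_mul_sqrt_three_lt : 96 * √3 < 25 * √5 * π := by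
  refine lt_of_pow_lt_pow_left₀ 2 (by positivity) ?_
  calc (96 * √3) ^ 2 = 96 ^ 2 * 3 := by rw [mul_pow, sq_sqrt (by norm_num)]
    _ < 25 ^ 2 * 5 * 3 ^ 2 := by norm_num
    _ < 25 ^ 2 * 5 * π ^ 2 := by gcongr; exact pi_gt_three
    _ = (25 * √5 * π) ^ 2 := by rw [mul_pow, mul_pow, sq_sqrt (by norm_num)]

/-- For `π/3 < β < π/2`, `(1 / (8 cos β (1 − 4 cos²β)²)) · (β / sin β) > 1`. -/
theorem stmt_8 (β : ℝ) (h1 : π / 3 < β) (h2 : β < π / 2) :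
    (1 / (8 * cos β * (1 - 4 * cos β ^ 2) ^ 2)) * (β / sin β) > 1 := by
  have hβ : β ∈ Set.Ioo 0 π := ⟨by linarith [pi_pos], by linarith [pi_pos]⟩
  have cos_pos : 0 < cos β := cos_pos_of_mem_Ioo ⟨by linarith [pi_pos], h2⟩
  have cos_lt_half : cos β < 1 / 2 :=
    cos_pi_div_three ▸ cos_lt_cos_of_nonneg_of_le_pi (by positivity) hβ.2.le h1
  have one_sub_pos : 0 < 1 - 4 * cos β ^ 2 := by nlinarith
  have cos_factor_le : 8 * cos β * (1 - 4 * cos β ^ 2) ^ 2 ≤ 64 / (25 * √5) := by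
    have := mul_one_sub_sq_sq_le (u := 2 * cos β) (by linarith)
    linear_combination 4 * this
  have lt_div_sin : π / 3 / (√3 / 2) < β / sin β :=
    sin_pi_div_three ▸ strictMonoOn_div_sin ⟨by positivity, by linarith [pi_pos]⟩ hβ h1
  calc 1 < 25 * √5 * π / (96 * √3) :=
        (one_lt_div (by positivity)).mpr ninety_six_mul_sqrt_three_lt
    _ = 1 / (64 / (25 * √5)) * (π / 3 / (√3 / 2)) := by field_simp; norm_num
    _ < 1 / (8 * cos β * (1 - 4 * cos β ^ 2) ^ 2) * (β / sin β) :=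
        mul_lt_mul' (one_div_le_one_div_of_le (by positivity) cos_factor_le) lt_div_sin
          (by positivity) (by positivity)
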